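/- Let X be a proper metric space and let Γ be a group acting geometrically on X. Let ζ_1, …, ζ_k ∈ Γ be free generators of a free abelian subgroup Λ of Γ. Assume Min_X(Λ) = ⋂_{i≤k} Min_X(ζ_i) is nonempty, and let R > 0 be such that M_R = {x ∈ X | Σ_{i≤k} d(ζ_i•x, x) ≤ R} is nonempty. Then the Hausdorff distance between M_R and Min_X(Λ) is finite: there is D ≥ 0 such that every point of M_R is within distance D of Min_X(Λ) and every point of Min_X(Λ) is within distance D of M_R. (Paper: Corollary 3.) -/

import Mathlib

/-!
Displacement is invariant under conjugation. Hence, if `γ` moves a point of `M_R` into a fixed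
compact fundamental set, then every `γ ζᵢ γ⁻¹` moves some point of that set by at most `R`, and
proper discontinuity leaves only finitely many tuples `(γ ζᵢ γ⁻¹)ᵢ`. Two elements giving the same
tuple differ by an element of the centralizer of the `ζᵢ`, so this centralizer acts coboundedly on
`M_R`. As it also preserves `Min_X(Λ)`, a single orbit in `Min_X(Λ)` is already coarsely dense in
`M_R`.
-/

theorem exists_finite_subset_inv_mul_mem_centralizer {G ι : Type*} [Group G] (ζ : ι → G)
    {S : Set G} (hS : ((fun γ i ↦ γ * ζ i * γ⁻¹) '' S).Finite) :
    ∃ T ⊆ S, T.Finite ∧ ∀ γ ∈ S, ∃ g ∈ T, g⁻¹ * γ ∈ Subgroup.centralizer (Set.range ζ) := by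
  obtain ⟨T, hTS, hT⟩ := Set.exists_subset_bijOn S (fun γ i ↦ γ * ζ i * γ⁻¹)
  refine ⟨T, hTS, hT.finite_iff_finite.mpr hS, fun γ hγ ↦ ?_⟩
  obtain ⟨g, hg, hgγ⟩ := hT.surjOn (Set.mem_image_of_mem _ hγ)
  refine ⟨g, hg, Subgroup.mem_centralizer_iff.mpr ?_⟩
  rintro _ ⟨i, rfl⟩
  have hconj : g * ζ i * g⁻¹ = γ * ζ i * γ⁻¹ := congrFun hgγ i
  calc ζ i * (g⁻¹ * γ) = g⁻¹ * (g * ζ i * g⁻¹) * γ := by group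
    _ = g⁻¹ * (γ * ζ i * γ⁻¹) * γ := by rw [hconj]
    _ = g⁻¹ * γ * ζ i := by group

theorem properlyDiscontinuousSMul_of_finite_image_inter_self {Γ X : Type*} [TopologicalSpace X]
    [SMul Γ X] (h : ∀ K : Set X, IsCompact K → {γ : Γ | ((γ • ·) '' K ∩ K).Nonempty}.Finite) :
    ProperlyDiscontinuousSMul Γ X where
  finite_disjoint_inter_image {K L} hK hL :=
    (h (K ∪ L) (hK.union hL)).subset fun _ hγ ↦
      hγ.mono (Set.inter_subset_inter (Set.image_mono Set.subset_union_left)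
        Set.subset_union_right)

section IsometricAction

variable {X Γ ι : Type*} [PseudoMetricSpace X] [Group Γ] [MulAction Γ X]

variable (X) in
/-- The translation length `|γ|_X` of `γ`: the infimum of the displacement `x ↦ d(γ • x, x)`. -/
noncomputable def translationLength (γ : Γ) : ℝ :=
  ⨅ x : X, dist (γ • x) x

variable (X) in
/-- The minimal displacement set `Min_X(γ)`: the points at which the displacement of `γ` attains
the translation length. It may be empty. -/
def minDisplacementSet (γ : Γ) : Set X :=
  {x | dist (γ • x) x = translationLength X γ}

theorem translationLength_le_dist_smul (γ : Γ) (x : X) : translationLength X γ ≤ dist (γ • x) x :=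
  ciInf_le ⟨0, Set.forall_mem_range.mpr fun _ ↦ dist_nonneg⟩ x

theorem iInter_minDisplacementSet_subset_setOf_sum_dist_le [Fintype ι] (ζ : ι → Γ) {R : ℝ}
    (hR : {x : X | ∑ i, dist (ζ i • x) x ≤ R}.Nonempty) :
    ⋂ i, minDisplacementSet X (ζ i) ⊆ {x : X | ∑ i, dist (ζ i • x) x ≤ R} := by
  obtain ⟨z, hz⟩ := hR
  intro x hx
  calc ∑ i, dist (ζ i • x) x = ∑ i, translationLength X (ζ i) :=
        Finset.sum_congr rfl fun i _ ↦ Set.mem_iInter.mp hx i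
    _ ≤ ∑ i, dist (ζ i • z) z :=
        Finset.sum_le_sum fun i _ ↦ translationLength_le_dist_smul (ζ i) z
    _ ≤ R := hz

theorem finite_setOf_exists_mem_dist_smul_le [ProperSpace X] [ProperlyDiscontinuousSMul Γ X]
    {K : Set X} (hK : Bornology.IsBounded K) (R : ℝ) :
    {g : Γ | ∃ y ∈ K, dist (g • y) y ≤ R}.Finite := by
  have hcompact : IsCompact (Metric.cthickening R K) :=
    Metric.isCompact_of_isClosed_isBounded Metric.isClosed_cthickening hK.cthickening
  refine (ProperlyDiscontinuousSMul.finite_disjoint_inter_image hcompact hcompact).subset ?_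
  rintro g ⟨y, hyK, hgy⟩
  exact ⟨g • y, Set.mem_image_of_mem _ (Metric.self_subset_cthickening K hyK),
    Metric.mem_cthickening_of_dist_le _ _ _ _ hyK hgy⟩

variable [IsIsometricSMul Γ X]

theorem dist_conj_smul_smul (γ g : Γ) (x : X) :
    dist ((γ * g * γ⁻¹) • γ • x) (γ • x) = dist (g • x) x := by
  rw [smul_smul, inv_mul_cancel_right, mul_smul, dist_smul]

theorem smul_mem_minDisplacementSet_of_commute {z g : Γ} (hzg : Commute z g) {x : X}
    (hx : x ∈ minDisplacementSet X g) : z • x ∈ minDisplacementSet X g := by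
  have hdist := dist_conj_smul_smul z g x
  rw [hzg.eq, mul_inv_cancel_right] at hdist
  exact hdist.trans hx

theorem smul_mem_iInter_minDisplacementSet {ζ : ι → Γ} {z : Γ}
    (hz : z ∈ Subgroup.centralizer (Set.range ζ)) {x : X}
    (hx : x ∈ ⋂ i, minDisplacementSet X (ζ i)) : z • x ∈ ⋂ i, minDisplacementSet X (ζ i) :=
  Set.mem_iInter.mpr fun i ↦ smul_mem_minDisplacementSet_of_commute
    (Subgroup.mem_centralizer_iff.mp hz (ζ i) (Set.mem_range_self i)).symm (Set.mem_iInter.mp hx i)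

variable [ProperSpace X] [ProperlyDiscontinuousSMul Γ X]

theorem exists_isBounded_forall_exists_centralizer_smul_mem [Finite ι] {K : Set X}
    (hK : Bornology.IsBounded K) (hcover : ∀ x : X, ∃ γ : Γ, γ • x ∈ K) (ζ : ι → Γ) (R : ℝ) :
    ∃ B : Set X, Bornology.IsBounded B ∧ ∀ x : X, (∀ i, dist (ζ i • x) x ≤ R) →
      ∃ z ∈ Subgroup.centralizer (Set.range ζ), z • x ∈ B := by
  let S : Set Γ := {γ | ∃ x : X, (∀ i, dist (ζ i • x) x ≤ R) ∧ γ • x ∈ K}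
  have hconj : ((fun γ i ↦ γ * ζ i * γ⁻¹) '' S).Finite := by
    refine (Set.Finite.pi' fun _ ↦ finite_setOf_exists_mem_dist_smul_le hK R).subset ?_
    rintro _ ⟨γ, ⟨x, hx, hγx⟩, rfl⟩ i
    exact ⟨γ • x, hγx, (dist_conj_smul_smul γ (ζ i) x).trans_le (hx i)⟩
  obtain ⟨T, -, hT, hST⟩ := exists_finite_subset_inv_mul_mem_centralizer ζ hconj
  refine ⟨⋃ g ∈ T, (g⁻¹ • ·) '' K, (Bornology.isBounded_biUnion hT).mpr fun g _ ↦
    (isometry_smul X g⁻¹).lipschitz.isBounded_image hK, fun x hx ↦ ?_⟩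
  obtain ⟨γ, hγx⟩ := hcover x
  obtain ⟨g, hg, hgγ⟩ := hST γ ⟨x, hx, hγx⟩
  exact ⟨g⁻¹ * γ, hgγ, Set.mem_biUnion hg ⟨γ • x, hγx, (mul_smul g⁻¹ γ x).symm⟩⟩

theorem corollary3_hausdorff_distance_finite_general [Fintype ι]
    (hcobounded : ∃ K : Set X, Bornology.IsBounded K ∧ ∀ x : X, ∃ γ : Γ, γ • x ∈ K)
    (ζ : ι → Γ) (hMin : (⋂ i, minDisplacementSet X (ζ i)).Nonempty) {R : ℝ}
    (hR : {x : X | ∑ i, dist (ζ i • x) x ≤ R}.Nonempty) :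
    ∃ D : ℝ, 0 ≤ D ∧
      (∀ x ∈ {x : X | ∑ i, dist (ζ i • x) x ≤ R},
        ∃ y ∈ ⋂ i, minDisplacementSet X (ζ i), dist x y ≤ D) ∧
      (∀ y ∈ ⋂ i, minDisplacementSet X (ζ i),
        ∃ x ∈ {x : X | ∑ i, dist (ζ i • x) x ≤ R}, dist x y ≤ D) := by
  obtain ⟨K, hK, hcover⟩ := hcobounded
  obtain ⟨m, hm⟩ := hMin
  obtain ⟨B, hB, hcentralizer⟩ :=
    exists_isBounded_forall_exists_centralizer_smul_mem hK hcover ζ R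
  obtain ⟨D, hD, hBD⟩ := hB.subset_closedBall_lt 0 m
  refine ⟨D, hD.le, fun x hx ↦ ?_, fun y hy ↦
    ⟨y, iInter_minDisplacementSet_subset_setOf_sum_dist_le ζ hR hy, (dist_self y).trans_le hD.le⟩⟩
  have hle (i : ι) : dist (ζ i • x) x ≤ R :=
    (Finset.single_le_sum (f := fun j ↦ dist (ζ j • x) x) (fun _ _ ↦ dist_nonneg)
      (Finset.mem_univ i)).trans hx
  obtain ⟨z, hz, hzx⟩ := hcentralizer x hle
  refine ⟨z⁻¹ • m, smul_mem_iInter_minDisplacementSet (inv_mem hz) hm, ?_⟩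
  calc dist x (z⁻¹ • m) = dist (z • x) m := by rw [← dist_smul z, smul_inv_smul]
    _ ≤ D := hBD hzx

end IsometricAction

/-- **Corollary 3.** Let `X` be a proper metric space with a geometric action of `Γ`
and `ζ 1, …, ζ k` free generators of a free abelian subgroup `Λ` of `Γ`. If
`Min_X(Λ)` is nonempty and `M_R` is nonempty for some `R > 0`, then the Hausdorff
distance between `M_R` and `Min_X(Λ)` is finite. -/
theorem corollary3_hausdorff_distance_finite
    {X : Type*} [MetricSpace X] [ProperSpace X]
    {Γ : Type*} [Group Γ] [MulAction Γ X]
    -- Γ acts by isometries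
    (isom : ∀ (γ : Γ) (x y : X), dist (γ • x) (γ • y) = dist x y)
    -- Γ acts properly discontinuously
    (propdisc : ∀ K : Set X, IsCompact K →
      {γ : Γ | ((fun x => γ • x) '' K ∩ K).Nonempty}.Finite)
    -- Γ acts cocompactly
    (cocpt : ∃ K : Set X, IsCompact K ∧ ∀ x : X, ∃ γ : Γ, γ • x ∈ K)
    -- ζ 1, …, ζ k are free generators of a free abelian subgroup of Γ
    {k : ℕ} (ζ : Fin k → Γ)
    (φ : Multiplicative (Fin k → ℤ) →* Γ)
    (hφinj : Function.Injective φ)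
    (hφζ : ∀ i : Fin k, φ (Multiplicative.ofAdd (Pi.single i 1)) = ζ i)
    -- Min_X(Λ) is nonempty
    (MinΛ : Set X)
    (hMin : MinΛ = ⋂ i : Fin k,
      {x : X | dist (ζ i • x) x = ⨅ y : X, dist (ζ i • y) y})
    (hMinne : MinΛ.Nonempty)
    -- M_R is nonempty for some R > 0
    (R : ℝ) (hR : 0 < R)
    (MR : Set X)
    (hMR : MR = {x : X | ∑ i : Fin k, dist (ζ i • x) x ≤ R})
    (hMRne : MR.Nonempty) :
    ∃ D : ℝ, 0 ≤ D ∧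
      (∀ x ∈ MR, ∃ y ∈ MinΛ, dist x y ≤ D) ∧
      (∀ y ∈ MinΛ, ∃ x ∈ MR, dist x y ≤ D) := by
  subst hMin hMR
  obtain ⟨K, hK, hcover⟩ := cocpt
  have : IsIsometricSMul Γ X := ⟨fun γ ↦ .of_dist_eq (isom γ)⟩
  have := properlyDiscontinuousSMul_of_finite_image_inter_self propdisc
  exact corollary3_hausdorff_distance_finite_general ⟨K, hK.isBounded, hcover⟩ ζ hMinne hMRne
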